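/- The 3DSMI instance of dimension 3 with vertex set {0,1,…,8} (vertex v having gender v mod 3, edges going from gender g to gender (g+1) mod 3), with rank-1 edges 0→1, 1→2, 2→3, 3→4, 4→5, 5→0, 6→4, 7→8, 8→0, rank-2 edges 4→8, 8→6, 0→7, 1→5, 5→3, 3→1, and rank-3 edge 4→2, admits no weakly stable matching. -/

import Mathlib

/-- A 3DSMI instance of dimension `n`: a directed graph on a vertex set `V`
partitioned into three genders (men, women, dogs), each of size `n`, where every
edge goes from gender `g` to gender `g+1`, together with a rank function such that
for every vertex of out-degree `k` the ranks of its outgoing edges are exactly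
`1, …, k`. -/
structure TDSMI (V : Type) [Fintype V] [DecidableEq V] (n : ℕ) where
  E : V → V → Bool
  r : V → V → ℕ
  gender : V → Fin 3
  gender_card : ∀ g : Fin 3, (Finset.univ.filter fun v => gender v = g).card = n
  edge_gender : ∀ v w : V, E v w → gender w = gender v + 1
  rank_bij : ∀ v : V,
    (Finset.univ.filter fun w => E v w).image (r v)
      = Finset.Icc 1 (Finset.univ.filter fun w => E v w).card

namespace TDSMI

variable {V : Type} [Fintype V] [DecidableEq V] {n : ℕ}

/-- A family: a directed 3-cycle `a → b → c → a`. -/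
def IsFamily (G : TDSMI V n) (a b c : V) : Prop :=
  G.E a b ∧ G.E b c ∧ G.E c a

/-- `v` is one of the vertices of the triple `t`. -/
def MemTriple (v : V) (t : V × V × V) : Prop :=
  v = t.1 ∨ v = t.2.1 ∨ v = t.2.2

/-- A matching: a set of pairwise vertex-disjoint families. -/
def IsMatching (G : TDSMI V n) (F : Finset (V × V × V)) : Prop :=
  (∀ t ∈ F, G.IsFamily t.1 t.2.1 t.2.2) ∧
  ∀ t ∈ F, ∀ t' ∈ F, t ≠ t' → ∀ v : V, ¬ (MemTriple v t ∧ MemTriple v t')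

/-- `w` is the vertex that the edge leaving `v` inside its family of `F` points to. -/
def MatchedTo (F : Finset (V × V × V)) (v w : V) : Prop :=
  ∃ t ∈ F, (t.1 = v ∧ t.2.1 = w) ∨ (t.2.1 = v ∧ t.2.2 = w) ∨ (t.2.2 = v ∧ t.1 = w)

/-- `r(v,w) < R_F(v)`: the rank of the edge `v → w` is smaller than the rank of `v` in
the matching `F` (if `v` is in no family of `F`, its rank is `+∞` and this holds
vacuously). -/
def Prefers (G : TDSMI V n) (F : Finset (V × V × V)) (v w : V) : Prop :=
  ∀ u : V, MatchedTo F v u → G.r v w < G.r v u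

/-- The directed 3-cycle `(a, b, c)` blocks the matching `F`. -/
def Blocks (G : TDSMI V n) (F : Finset (V × V × V)) (a b c : V) : Prop :=
  G.IsFamily a b c ∧ G.Prefers F a b ∧ G.Prefers F b c ∧ G.Prefers F c a

/-- A matching is weakly stable if no directed 3-cycle blocks it. -/
def WeaklyStable (G : TDSMI V n) (F : Finset (V × V × V)) : Prop :=
  ∀ a b c : V, ¬ G.Blocks F a b c

end TDSMI

def rank1Edges : List (ℕ × ℕ) := [(0,1),(1,2),(2,3),(3,4),(4,5),(5,0),(6,4),(7,8),(8,0)]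
def rank2Edges : List (ℕ × ℕ) := [(4,8),(8,6),(0,7),(1,5),(5,3),(3,1)]
def rank3Edges : List (ℕ × ℕ) := [(4,2)]

/-- The 3DSMI instance of dimension 3 from Fig. 2 of the paper. -/
def G2 : TDSMI (Fin 9) 3 where
  E v w := decide ((v.val, w.val) ∈ rank1Edges ++ rank2Edges ++ rank3Edges)
  r v w :=
    if (v.val, w.val) ∈ rank1Edges then 1
    else if (v.val, w.val) ∈ rank2Edges then 2
    else if (v.val, w.val) ∈ rank3Edges then 3
    else 0
  gender v := ⟨v.val % 3, Nat.mod_lt _ (by norm_num)⟩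
  gender_card := by decide
  edge_gender := by decide
  rank_bij := by decide

namespace TDSMI

variable {V : Type}

/-- The directed 3-cycle `(a, b, c)` is, up to rotation, one of the triples of `F`. -/
def HasCycle (F : Finset (V × V × V)) (a b c : V) : Prop :=
  (a, b, c) ∈ F ∨ (b, c, a) ∈ F ∨ (c, a, b) ∈ F

theorem HasCycle.rotate {F : Finset (V × V × V)} {a b c : V} (h : HasCycle F a b c) :
    HasCycle F b c a := by
  unfold HasCycle at *; tauto

theorem MatchedTo.exists_hasCycle {F : Finset (V × V × V)} {v u : V} (h : MatchedTo F v u) :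
    ∃ w, HasCycle F v u w := by
  obtain ⟨⟨x, y, z⟩, ht, ⟨rfl, rfl⟩ | ⟨rfl, rfl⟩ | ⟨rfl, rfl⟩⟩ := h
  · exact ⟨z, Or.inl ht⟩
  · exact ⟨x, Or.inr (Or.inr ht)⟩
  · exact ⟨y, Or.inr (Or.inl ht)⟩

variable [Fintype V] [DecidableEq V] {n : ℕ}

theorem IsMatching.isFamily {G : TDSMI V n} {F : Finset (V × V × V)} (hF : G.IsMatching F)
    {a b c : V} (h : HasCycle F a b c) : G.IsFamily a b c := by
  rcases h with h | h | h <;> obtain ⟨h₁, h₂, h₃⟩ := hF.1 _ h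
  exacts [⟨h₁, h₂, h₃⟩, ⟨h₃, h₁, h₂⟩, ⟨h₂, h₃, h₁⟩]

theorem IsFamily.ne {G : TDSMI V n} {a b c : V} (h : G.IsFamily a b c) :
    a ≠ b ∧ b ≠ c ∧ c ≠ a := by
  have key : ∀ v w : V, G.E v w → v ≠ w := by
    rintro v _ hE rfl
    have := G.edge_gender v v hE
    omega
  exact ⟨key _ _ h.1, key _ _ h.2.1, key _ _ h.2.2⟩

/-- Two cycles of a matching through the same vertex coincide. -/
theorem IsMatching.hasCycle_unique {G : TDSMI V n} {F : Finset (V × V × V)}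
    (hF : G.IsMatching F) {a b c b' c' : V} (h : HasCycle F a b c) (h' : HasCycle F a b' c') :
    b = b' ∧ c = c' := by
  have hne := (hF.isFamily h).ne
  have key : ∀ t ∈ F, ∀ t' ∈ F, MemTriple a t → MemTriple a t' → t = t' :=
    fun t ht t' ht' hm hm' => by_contra fun hn => hF.2 t ht t' ht' hn a ⟨hm, hm'⟩
  rcases h with h | h | h <;> rcases h' with h' | h' | h' <;>
    have e := key _ h _ h' (by simp [MemTriple]) (by simp [MemTriple]) <;>
    simp only [Prod.mk.injEq] at e <;> grind

/-- A vertex that does not prefer `w` to its partner lies in a cycle of the matching whose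
edge at that vertex is ranked no worse than `w`. -/
theorem IsMatching.exists_of_not_prefers {G : TDSMI V n} {F : Finset (V × V × V)}
    (hF : G.IsMatching F) {v w : V} (h : ¬ G.Prefers F v w) :
    ∃ x y, HasCycle F v x y ∧ G.IsFamily v x y ∧ G.r v x ≤ G.r v w := by
  simp only [Prefers, not_forall, not_lt] at h
  obtain ⟨x, hx, hr⟩ := h
  obtain ⟨y, hy⟩ := hx.exists_hasCycle
  exact ⟨x, y, hy, hF.isFamily hy, hr⟩

theorem IsMatching.exists_of_isFamily {G : TDSMI V n} {F : Finset (V × V × V)}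
    (hF : G.IsMatching F) (hS : G.WeaklyStable F) {a b c : V} (h : G.IsFamily a b c) :
    (∃ x y, HasCycle F a x y ∧ G.IsFamily a x y ∧ G.r a x ≤ G.r a b) ∨
    (∃ x y, HasCycle F b x y ∧ G.IsFamily b x y ∧ G.r b x ≤ G.r b c) ∨
    (∃ x y, HasCycle F c x y ∧ G.IsFamily c x y ∧ G.r c x ≤ G.r c a) := by
  by_contra! hn
  refine hS a b c ⟨h, ?_, ?_, ?_⟩ <;> by_contra hp <;>
    obtain ⟨x, y, h₁, h₂, h₃⟩ := hF.exists_of_not_prefers hp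
  · exact (hn.1 x y h₁ h₂).not_ge h₃
  · exact (hn.2.1 x y h₁ h₂).not_ge h₃
  · exact (hn.2.2 x y h₁ h₂).not_ge h₃

instance (G : TDSMI V n) (a b c : V) : Decidable (G.IsFamily a b c) := by
  unfold IsFamily; infer_instance

end TDSMI

open TDSMI

/-- This instance admits no weakly stable matching. -/
theorem stmt_2 : ¬ ∃ F : Finset (Fin 9 × Fin 9 × Fin 9),
    G2.IsMatching F ∧ G2.WeaklyStable F := by
  rintro ⟨F, hF, hS⟩
  have stable {a b c : Fin 9} (l : List (Fin 9 × Fin 9 × Fin 9)) (h : G2.IsFamily a b c)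
      (ha : ∀ x y, G2.IsFamily a x y → G2.r a x ≤ G2.r a b →
        (a, x, y) ∈ l ∨ (x, y, a) ∈ l ∨ (y, a, x) ∈ l)
      (hb : ∀ x y, G2.IsFamily b x y → G2.r b x ≤ G2.r b c →
        (b, x, y) ∈ l ∨ (x, y, b) ∈ l ∨ (y, b, x) ∈ l)
      (hc : ∀ x y, G2.IsFamily c x y → G2.r c x ≤ G2.r c a →
        (c, x, y) ∈ l ∨ (x, y, c) ∈ l ∨ (y, c, x) ∈ l) :
      ∃ t ∈ l, HasCycle F t.1 t.2.1 t.2.2 := by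
    rcases hF.exists_of_isFamily hS h with ⟨x, y, h₁, h₂, h₃⟩ | ⟨x, y, h₁, h₂, h₃⟩ |
      ⟨x, y, h₁, h₂, h₃⟩
    · rcases ha x y h₂ h₃ with h | h | h
      exacts [⟨_, h, h₁⟩, ⟨_, h, h₁.rotate⟩, ⟨_, h, h₁.rotate.rotate⟩]
    · rcases hb x y h₂ h₃ with h | h | h
      exacts [⟨_, h, h₁⟩, ⟨_, h, h₁.rotate⟩, ⟨_, h, h₁.rotate.rotate⟩]
    · rcases hc x y h₂ h₃ with h | h | h
      exacts [⟨_, h, h₁⟩, ⟨_, h, h₁.rotate⟩, ⟨_, h, h₁.rotate.rotate⟩]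
  have unique {a b c b' c' : Fin 9} (h : HasCycle F a b c) (h' : HasCycle F a b' c')
      (hne : b ≠ b' ∨ c ≠ c') : False := by
    obtain ⟨rfl, rfl⟩ := hF.hasCycle_unique h h'
    simp at hne
  have stable015 := stable (a := 0) (b := 1) (c := 5)
    [(0, 1, 5), (3, 1, 2), (3, 1, 5)]
    (by decide) (by decide) (by decide) (by decide)
  have stable078 := stable (a := 0) (b := 7) (c := 8)
    [(0, 1, 5), (0, 7, 8)]
    (by decide) (by decide) (by decide) (by decide)
  have stable345 := stable (a := 3) (b := 4) (c := 5)
    [(0, 1, 5), (3, 4, 5), (3, 4, 2), (3, 1, 5)]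
    (by decide) (by decide) (by decide) (by decide)
  have stable342 := stable (a := 3) (b := 4) (c := 2)
    [(3, 4, 5), (3, 4, 2), (3, 1, 2), (6, 4, 8)]
    (by decide) (by decide) (by decide) (by decide)
  have stable312 := stable (a := 3) (b := 1) (c := 2)
    [(3, 4, 5), (3, 4, 2), (3, 1, 2), (3, 1, 5)]
    (by decide) (by decide) (by decide) (by decide)
  have stable648 := stable (a := 6) (b := 4) (c := 8)
    [(0, 7, 8), (3, 4, 5), (6, 4, 8)]
    (by decide) (by decide) (by decide) (by decide)
  simp only [List.mem_cons, List.not_mem_nil, or_false, exists_eq_or_imp, exists_eq_left]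
    at stable015 stable078 stable345 stable342 stable312 stable648
  have disjoint015_078 (h : HasCycle F 0 1 5) (h' : HasCycle F 0 7 8) :
      False := unique h h' (by decide)
  have disjoint015_345 (h : HasCycle F 0 1 5) (h' : HasCycle F 3 4 5) :
      False := unique h.rotate.rotate h'.rotate.rotate (by decide)
  have disjoint015_312 (h : HasCycle F 0 1 5) (h' : HasCycle F 3 1 2) :
      False := unique h.rotate h'.rotate (by decide)
  have disjoint015_315 (h : HasCycle F 0 1 5) (h' : HasCycle F 3 1 5) :
      False := unique h.rotate h'.rotate (by decide)
  have disjoint078_648 (h : HasCycle F 0 7 8) (h' : HasCycle F 6 4 8) :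
      False := unique h.rotate.rotate h'.rotate.rotate (by decide)
  have disjoint345_312 (h : HasCycle F 3 4 5) (h' : HasCycle F 3 1 2) :
      False := unique h h' (by decide)
  have disjoint345_315 (h : HasCycle F 3 4 5) (h' : HasCycle F 3 1 5) :
      False := unique h h' (by decide)
  have disjoint342_312 (h : HasCycle F 3 4 2) (h' : HasCycle F 3 1 2) :
      False := unique h h' (by decide)
  have disjoint342_315 (h : HasCycle F 3 4 2) (h' : HasCycle F 3 1 5) :
      False := unique h h' (by decide)
  have disjoint342_648 (h : HasCycle F 3 4 2) (h' : HasCycle F 6 4 8) :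
      False := unique h.rotate h'.rotate (by decide)
  have disjoint312_315 (h : HasCycle F 3 1 2) (h' : HasCycle F 3 1 5) :
      False := unique h h' (by decide)
  grind only
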